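/- Let σ be the chord diagram of order 4 on ZMod 8 with chords {0,3}, {1,5}, {2,6}, {4,7} (interlace sequence (2,2,3,3): the chords {1,5} and {2,6} each interlace all three other chords, while {0,3} and {4,7} interlace only those two). Then ∂Γ_σ(z) = 12z + 4z². -/

import Mathlib

/-- Number of cycles (orbits, counting fixed points) of a self-map:
the number of connected components of its functional graph. For a permutation
this is the number of cycles, counting fixed points. -/
noncomputable def cycles {α : Type*} (f : α → α) : ℕ :=
  Nat.card (Quot fun i j => f i = j)

-- `restrictTo σ A` agrees with `σ` on `A` and fixes everything else.
-- If `A` is the set of endpoints of a set of chords of `σ`, this is `σ_A`.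
open Classical in
noncomputable def restrictTo {α : Type*} (f : α → α) (A : Set α) : α → α :=
  fun i => if i ∈ A then f i else i

/-- The rotation `i ↦ i + 1` of the `2n` points of a chord diagram. -/
def rot (n : ℕ) : ZMod (2 * n) → ZMod (2 * n) := fun i => i + 1

/-- Genus of the partial dual of the chord diagram `σ` relative to the set of
chords whose endpoint set is the (`σ`-invariant) set `A`. -/
noncomputable def pdGenus (n : ℕ) (σ : ZMod (2 * n) → ZMod (2 * n))
    (A : Set (ZMod (2 * n))) : ℕ :=
  (n + 2 - cycles (rot n ∘ restrictTo σ A) - cycles (rot n ∘ restrictTo σ Aᶜ)) / 2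

/-- Genus of the one-vertex ribbon graph of the chord diagram `σ`. -/
noncomputable def genus (n : ℕ) (σ : ZMod (2 * n) → ZMod (2 * n)) : ℕ :=
  (n + 1 - cycles (rot n ∘ σ)) / 2

/-- The partial-dual genus polynomial `∂Γ_σ(z) = Σ_A z^{g_A(σ)}`, the sum being
over all sets `A` of chords of `σ` (encoded as `σ`-invariant subsets of the
`2n` points). -/
noncomputable def pdPoly (n : ℕ) (σ : ZMod (2 * n) → ZMod (2 * n)) : Polynomial ℤ :=
  if h : n = 0 then 1 else
    haveI : NeZero (2 * n) := ⟨by omega⟩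
    ∑ A ∈ Finset.univ.filter (fun A : Finset (ZMod (2 * n)) => ∀ i ∈ A, σ i ∈ A),
      Polynomial.X ^ pdGenus n σ (↑A : Set (ZMod (2 * n)))

/-- If `m` is constant along `f` and `m i` is reachable from `i`, then the classes of the
functional graph of `f` are counted by the image of `m`. -/
theorem cycles_eq_card_image {α : Type*} [Fintype α] [DecidableEq α] (f m : α → α)
    (h1 : ∀ i, m (f i) = m i) (h2 : ∀ i, ∃ k : Fin 8, f^[k.val] i = m i) :
    cycles f = (Finset.univ.image m).card := by
  have hit : ∀ (k : ℕ) (i : α), Quot.mk (fun i j => f i = j) (f^[k] i) =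
      Quot.mk (fun i j => f i = j) i := by
    intro k
    induction k with
    | zero => intro i; rfl
    | succ k ih =>
      intro i
      rw [Function.iterate_succ_apply, ih]
      exact (Quot.sound (r := fun i j => f i = j) rfl).symm
  have hm : ∀ i : α, Quot.mk (fun i j => f i = j) (m i) = Quot.mk (fun i j => f i = j) i := by
    intro i
    obtain ⟨k, hk⟩ := h2 i
    rw [← hk, hit]
  let L : Quot (fun i j => f i = j) → α := Quot.lift m (by
    intro a b hab
    rw [← hab, h1])
  have hinj : Function.Injective L := by
    intro x y
    induction x using Quot.ind with
    | mk a =>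
      induction y using Quot.ind with
      | mk b =>
        intro h
        rw [← hm a, ← hm b]
        have h' : m a = m b := h
        rw [h']
  have hrange : Set.range L = ↑(Finset.univ.image m) := by
    ext x
    simp only [Set.mem_range, Finset.coe_image, Finset.coe_univ, Set.image_univ]
    constructor
    · rintro ⟨q, rfl⟩
      induction q using Quot.ind with
      | mk a => exact ⟨a, rfl⟩
    · rintro ⟨a, rfl⟩
      exact ⟨Quot.mk _ a, rfl⟩
  unfold cycles
  rw [← Nat.card_range_of_injective hinj, hrange, Nat.card_coe_set_eq, Set.ncard_coe_finset]

/-- The concrete chord diagram. -/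
def sig : Fin 8 → Fin 8 := ![3, 5, 6, 0, 7, 1, 2, 4]

/-- Boundary permutation for the set `A`. -/
def bdry (A : Finset (Fin 8)) : Fin 8 → Fin 8 := fun i => (if i ∈ A then sig i else i) + 1

/-- Smallest element of the first eight iterates. -/
def rep (f : Fin 8 → Fin 8) (i : Fin 8) : Fin 8 :=
  (List.range 8).foldl (fun a k => min a (f^[k] i)) i

/-- Computable cycle count. -/
def cyc (A : Finset (Fin 8)) : ℕ := (Finset.univ.image (rep (bdry A))).card

/-- Computable genus. -/
def gen (A : Finset (Fin 8)) : ℕ := (4 + 2 - cyc A - cyc Aᶜ) / 2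

/-- Computable list of chord sets. -/
def inv : Finset (Finset (Fin 8)) := Finset.univ.filter fun A => ∀ i ∈ A, sig i ∈ A

theorem mem_inv (A : Finset (Fin 8)) : A ∈ inv ↔ ∀ i ∈ A, sig i ∈ A := by
  simp [inv]

theorem mem_filter_any {β : Type*} (p : β → Prop) (d : DecidablePred p) (s : Finset β) (a : β)
    (ha : a ∈ s) : a ∈ @Finset.filter β p d s ↔ p a := by
  simp [ha]

theorem inv_ok : ∀ A ∈ inv, Aᶜ ∈ inv ∧ (∀ i, rep (bdry A) (bdry A i) = rep (bdry A) i) ∧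
    (∀ i, ∃ k : Fin 8, (bdry A)^[k.val] i = rep (bdry A) i) := by
  decide +kernel

theorem inv_gen : ∀ A ∈ inv, gen A = 1 ∨ gen A = 2 := by decide +kernel

theorem card_one : (inv.filter fun A => gen A = 1).card = 12 := by decide +kernel

theorem card_two : (inv.filter fun A => ¬ gen A = 1).card = 4 := by decide +kernel

theorem cycles_bdry (A : Finset (Fin 8)) (hA : A ∈ inv) : cycles (bdry A) = cyc A :=
  cycles_eq_card_image _ _ (inv_ok A hA).2.1 (inv_ok A hA).2.2

theorem rot_restrict (A : Finset (Fin 8)) (B : Set (Fin 8)) (h : ∀ i, i ∈ B ↔ i ∈ A) :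
    (rot 4 ∘ restrictTo (α := Fin 8) sig B : Fin 8 → Fin 8) = bdry A := by
  funext i
  change (restrictTo (α := Fin 8) sig B i : Fin 8) + 1 = bdry A i
  unfold restrictTo bdry
  by_cases hi : i ∈ A
  · rw [if_pos hi, if_pos ((h i).2 hi)]
  · rw [if_neg hi, if_neg (fun hh => hi ((h i).1 hh))]

theorem pdGenus_eq (A : Finset (Fin 8)) (hA : A ∈ inv) :
    pdGenus 4 sig (↑A : Set (Fin 8)) = gen A := by
  have e1 := rot_restrict A (↑A) (fun i => by simp)
  have e2 := rot_restrict Aᶜ ((↑A : Set (Fin 8))ᶜ) (fun i => by simp)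
  have c1 := cycles_bdry A hA
  have c2 := cycles_bdry Aᶜ (inv_ok A hA).1
  rw [← e1] at c1
  rw [← e2] at c2
  unfold gen
  rw [← c1, ← c2]
  rfl

open Polynomial in
theorem sum_inv : ∑ A ∈ inv, (X : ℤ[X]) ^ pdGenus 4 sig (↑A : Set (Fin 8)) =
    12 * X + 4 * X ^ 2 := by
  rw [Finset.sum_congr rfl (fun A hA => by rw [pdGenus_eq A hA]),
    ← Finset.sum_filter_add_sum_filter_not inv (fun A => gen A = 1)]
  have s1 : ∑ A ∈ inv.filter (fun A => gen A = 1), (X : ℤ[X]) ^ gen A = 12 * X := by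
    rw [Finset.sum_congr rfl (g := fun _ => (X : ℤ[X]))
      (fun A hA => by rw [(Finset.mem_filter.1 hA).2, pow_one]), Finset.sum_const, card_one]
    simp
  have s2 : ∑ A ∈ inv.filter (fun A => ¬ gen A = 1), (X : ℤ[X]) ^ gen A = 4 * X ^ 2 := by
    rw [Finset.sum_congr rfl (g := fun _ => (X : ℤ[X]) ^ 2)
      (fun A hA => by
        obtain ⟨ha, hb⟩ := Finset.mem_filter.1 hA
        rw [(inv_gen A ha).resolve_left hb]), Finset.sum_const, card_two]
    simp
  rw [s1, s2]

open Polynomial in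
/-- For the chord diagram of order 4 with chords `{0,3}, {1,5}, {2,6}, {4,7}`
(interlace sequence `(2,2,3,3)`), the partial-dual genus polynomial is `12z + 4z²`. -/
theorem pdPoly_2233 (σ : ZMod 8 → ZMod 8)
    (h03 : σ 0 = 3) (h30 : σ 3 = 0) (h15 : σ 1 = 5) (h51 : σ 5 = 1)
    (h26 : σ 2 = 6) (h62 : σ 6 = 2) (h47 : σ 4 = 7) (h74 : σ 7 = 4) :
    pdPoly 4 σ = 12 * X + 4 * X ^ 2 := by
  have hs : σ = sig := by
    funext i
    change Fin 8 at i
    fin_cases i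
    · exact h03
    · exact h15
    · exact h26
    · exact h30
    · exact h47
    · exact h51
    · exact h62
    · exact h74
  subst hs
  rw [← sum_inv]
  unfold pdPoly
  rw [dif_neg (by norm_num)]
  refine Finset.sum_congr ?_ (fun _ _ => rfl)
  ext A
  refine Iff.trans ?_ (mem_inv A).symm
  exact @mem_filter_any _ _ (_) _ A (@Finset.mem_univ _ (_) _)
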